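/- Let a, b : ℝ² → ℝ² be continuously differentiable vector fields with compact support, and let φ : ℝ² → ℝ² be the rotational field φ(x₁,x₂) = (−x₂, x₁). Then the Newton-linearized EMAC trilinear term vanishes: b_emac(a,b,φ) + b_emac(b,a,φ) − b_emac(a,a,φ) = 0. -/

import Mathlib

open MeasureTheory RealInnerProductSpace

noncomputable section

abbrev E2 := EuclideanSpace ℝ (Fin 2)

/-- divergence of a vector field on ℝ² -/
def dvg (u : E2 → E2) (x : E2) : ℝ :=
  ∑ i, fderiv ℝ u x (EuclideanSpace.single i 1) i

/-- convective trilinear form  b_conv(u,v,w) = ∫ ((u·∇)v)·w -/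
def bConv (u v w : E2 → E2) : ℝ :=
  ∫ x, ⟪fderiv ℝ v x (u x), w x⟫

/-- EMAC trilinear form  b_emac(u,v,w) = ∫ (2D(u)v)·w + (∇·u)(v·w),
where (2D(u)v)·w = (∇u v)·w + (∇u w)·v. -/
def bEmac (u v w : E2 → E2) : ℝ :=
  ∫ x, (⟪fderiv ℝ u x (v x), w x⟫ + ⟪fderiv ℝ u x (w x), v x⟫
    + dvg u x * ⟪v x, w x⟫)

/-- L² norm -/
def l2Norm {F : Type*} [NormedAddCommGroup F] (f : E2 → F) : ℝ :=
  (∫ x, ‖f x‖ ^ 2) ^ ((1 : ℝ) / 2)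

/-- H¹ norm -/
def h1Norm (f : E2 → E2) : ℝ := l2Norm f + l2Norm (fderiv ℝ f)

/-- H² norm -/
def h2Norm (f : E2 → E2) : ℝ :=
  l2Norm f + l2Norm (fderiv ℝ f) + l2Norm (fderiv ℝ (fderiv ℝ f))

/-- rotational field φ(x₁,x₂) = (−x₂, x₁) -/
def phi : E2 → E2 := fun x => (WithLp.equiv 2 (Fin 2 → ℝ)).symm ![-x 1, x 0]

/-!
The sum of the integrands of `b_emac(u, v, w)` and `b_emac(v, u, w)` is the divergence of the flux
`⟪u, w⟫ v + ⟪v, w⟫ u + ⟪u, v⟫ w`, up to terms in the symmetric part of `∇w` (and `∇ · w` is its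
trace). These terms vanish when `∇w` is skew, so by the divergence theorem
`b_emac(u, v, w) + b_emac(v, u, w) = 0`. The pairs `(u, v) = (a, b)` and `(a, a)` together give the
Newton term, and `phi`, being linear and skew, is such a field `w`.
-/

section Divergence

variable {E : Type*} [NormedAddCommGroup E] [NormedSpace ℝ E]

/-- The divergence of a vector field, defined without coordinates as the trace of its derivative.
It is `0` at points where the field is not differentiable, and everywhere if the space is
infinite-dimensional. -/
def divergence (u : E → E) (x : E) : ℝ :=
  LinearMap.trace ℝ E (fderiv ℝ u x)

lemma divergence_fun_add {u v : E → E} {x : E} (hu : DifferentiableAt ℝ u x)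
    (hv : DifferentiableAt ℝ v x) :
    divergence (fun y => u y + v y) x = divergence u x + divergence v x := by
  simp [divergence, fderiv_fun_add hu hv]

lemma integrable_fderiv_of_hasCompactSupport [MeasurableSpace E] [OpensMeasurableSpace E]
    {μ : Measure E} [IsFiniteMeasureOnCompacts μ] {F : Type*} [NormedAddCommGroup F]
    [NormedSpace ℝ F] {f : E → F} (hf : ContDiff ℝ 1 f) (hcf : HasCompactSupport f) :
    Integrable (fderiv ℝ f) μ :=
  (hf.continuous_fderiv one_ne_zero).integrable_of_hasCompactSupport (hcf.fderiv ℝ)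

variable [FiniteDimensional ℝ E]

lemma divergence_fun_smul {f : E → ℝ} {u : E → E} {x : E} (hf : DifferentiableAt ℝ f x)
    (hu : DifferentiableAt ℝ u x) :
    divergence (fun y => f y • u y) x = fderiv ℝ f x (u x) + f x * divergence u x := by
  simp [divergence, fderiv_fun_smul hf hu, LinearMap.trace_smulRight, add_comm]

variable (E) in
/-- The trace of endomorphisms of a finite-dimensional space, as a continuous linear functional;
it lets the divergence be integrated by exchanging the trace with the integral. -/
def traceCLM : (E →L[ℝ] E) →L[ℝ] ℝ :=
  LinearMap.toContinuousLinearMap (LinearMap.trace ℝ E ∘ₗ ContinuousLinearMap.coeLM ℝ)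

lemma divergence_eq_traceCLM (u : E → E) (x : E) : divergence u x = traceCLM E (fderiv ℝ u x) :=
  rfl

lemma continuous_divergence {u : E → E} (hu : ContDiff ℝ 1 u) : Continuous (divergence u) :=
  (traceCLM E).continuous.comp (hu.continuous_fderiv one_ne_zero)

variable [MeasurableSpace E] [BorelSpace E] {μ : Measure E} [μ.IsAddHaarMeasure]

lemma integral_fderiv_eq_zero_of_hasCompactSupport {F : Type*} [NormedAddCommGroup F]
    [NormedSpace ℝ F] {f : E → F} (hf : ContDiff ℝ 1 f) (hcf : HasCompactSupport f) :
    ∫ x, fderiv ℝ f x ∂μ = 0 := by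
  have integrable_fderiv := integrable_fderiv_of_hasCompactSupport (μ := μ) hf hcf
  ext v
  rw [ContinuousLinearMap.integral_apply integrable_fderiv]
  simpa using integral_smul_fderiv_eq_neg_fderiv_smul_of_integrable (μ := μ) (f := fun _ => (1 : ℝ))
    (g := f) (v := v) (by simp) (by simpa using integrable_fderiv.apply_continuousLinearMap v)
    (by simpa using hf.continuous.integrable_of_hasCompactSupport hcf)
    (fun _ _ => differentiableAt_const _) (fun x _ => hf.differentiable one_ne_zero x)

theorem integral_divergence_eq_zero_of_hasCompactSupport {u : E → E} (hu : ContDiff ℝ 1 u)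
    (hcu : HasCompactSupport u) : ∫ x, divergence u x ∂μ = 0 := by
  simp only [divergence_eq_traceCLM]
  rw [(traceCLM E).integral_comp_comm (integrable_fderiv_of_hasCompactSupport hu hcu),
    integral_fderiv_eq_zero_of_hasCompactSupport hu hcu, map_zero]

end Divergence

section Emac

variable {E : Type*} [NormedAddCommGroup E] [InnerProductSpace ℝ E]

/-- A Killing field (infinitesimal rigid motion) of a Euclidean space: a `C¹` vector field whose
derivative is everywhere skew-adjoint. -/
structure IsKillingField (w : E → E) : Prop where
  contDiff : ContDiff ℝ 1 w
  skew : ∀ x y z, ⟪fderiv ℝ w x y, z⟫ + ⟪y, fderiv ℝ w x z⟫ = 0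

lemma isKillingField_of_skew {A : E →L[ℝ] E}
    (hA : ∀ y z, ⟪A y, z⟫ + ⟪y, A z⟫ = 0) : IsKillingField A where
  contDiff := A.contDiff
  skew x y z := by simpa only [A.fderiv] using hA y z

/-- The integrand of the EMAC trilinear form, in arbitrary dimension. -/
def emacDensity (u v w : E → E) (x : E) : ℝ :=
  ⟪fderiv ℝ u x (v x), w x⟫ + ⟪fderiv ℝ u x (w x), v x⟫ + divergence u x * ⟪v x, w x⟫

/-- The vector field whose divergence is the EMAC density symmetrized in its first two arguments,
when the third one is a Killing field. -/
def emacFlux (u v w : E → E) (x : E) : E :=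
  ⟪u x, w x⟫ • v x + ⟪v x, w x⟫ • u x + ⟪u x, v x⟫ • w x

lemma contDiff_emacFlux {u v w : E → E} (hu : ContDiff ℝ 1 u) (hv : ContDiff ℝ 1 v)
    (hw : ContDiff ℝ 1 w) : ContDiff ℝ 1 (emacFlux u v w) :=
  (((hu.inner ℝ hw).smul hv).add ((hv.inner ℝ hw).smul hu)).add ((hu.inner ℝ hv).smul hw)

lemma hasCompactSupport_emacFlux {u : E → E} (hcu : HasCompactSupport u) (v w : E → E) :
    HasCompactSupport (emacFlux u v w) :=
  hcu.mono <| Function.support_subset_iff'.2 fun x hx => by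
    simp [emacFlux, Function.notMem_support.1 hx]

lemma hasCompactSupport_emacDensity_left {u : E → E} (hcu : HasCompactSupport u) (v w : E → E) :
    HasCompactSupport (emacDensity u v w) :=
  (hcu.fderiv ℝ).mono <| Function.support_subset_iff'.2 fun x hx => by
    simp [emacDensity, divergence, Function.notMem_support.1 hx]

lemma hasCompactSupport_emacDensity_middle {v : E → E} (hcv : HasCompactSupport v) (u w : E → E) :
    HasCompactSupport (emacDensity u v w) :=
  hcv.mono <| Function.support_subset_iff'.2 fun x hx => by
    simp [emacDensity, Function.notMem_support.1 hx]

variable [FiniteDimensional ℝ E]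

lemma IsKillingField.divergence_eq_zero {w : E → E} (hw : IsKillingField w) (x : E) :
    divergence w x = 0 := by
  rw [divergence, LinearMap.trace_eq_sum_inner _ (stdOrthonormalBasis ℝ E)]
  refine Finset.sum_eq_zero fun i _ => ?_
  have skew_diagonal := hw.skew x (stdOrthonormalBasis ℝ E i) (stdOrthonormalBasis ℝ E i)
  rw [real_inner_comm] at skew_diagonal
  exact add_self_eq_zero.1 skew_diagonal

lemma divergence_emacFlux {u v w : E → E} (hu : Differentiable ℝ u) (hv : Differentiable ℝ v)
    (hw : IsKillingField w) (x : E) :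
    divergence (emacFlux u v w) x = emacDensity u v w x + emacDensity v u w x := by
  have hw' : Differentiable ℝ w := hw.contDiff.differentiable one_ne_zero
  have huw : DifferentiableAt ℝ (fun y => ⟪u y, w y⟫) x := (hu x).inner ℝ (hw' x)
  have hvw : DifferentiableAt ℝ (fun y => ⟪v y, w y⟫) x := (hv x).inner ℝ (hw' x)
  have huv : DifferentiableAt ℝ (fun y => ⟪u y, v y⟫) x := (hu x).inner ℝ (hv x)
  unfold emacFlux
  rw [divergence_fun_add ((huw.fun_smul (hv x)).fun_add (hvw.fun_smul (hu x)))
      (huv.fun_smul (hw' x)),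
    divergence_fun_add (huw.fun_smul (hv x)) (hvw.fun_smul (hu x)),
    divergence_fun_smul huw (hv x), divergence_fun_smul hvw (hu x),
    divergence_fun_smul huv (hw' x), hw.divergence_eq_zero x,
    fderiv_inner_apply ℝ (hu x) (hw' x), fderiv_inner_apply ℝ (hv x) (hw' x),
    fderiv_inner_apply ℝ (hu x) (hv x), real_inner_comm (fderiv ℝ v x (w x)) (u x),
    real_inner_comm (fderiv ℝ w x (v x)) (u x)]
  simp only [emacDensity]
  linear_combination hw.skew x (v x) (u x)

lemma continuous_emacDensity {u v w : E → E} (hu : ContDiff ℝ 1 u) (hv : Continuous v)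
    (hw : Continuous w) : Continuous (emacDensity u v w) := by
  have := hu.continuous_fderiv one_ne_zero
  have := continuous_divergence hu
  unfold emacDensity
  fun_prop

variable [MeasurableSpace E] [BorelSpace E] {μ : Measure E} [μ.IsAddHaarMeasure]

theorem integral_emacDensity_add_swap_eq_zero {u v w : E → E} (hu : ContDiff ℝ 1 u)
    (hv : ContDiff ℝ 1 v) (hcu : HasCompactSupport u) (hw : IsKillingField w) :
    ∫ x, emacDensity u v w x ∂μ + ∫ x, emacDensity v u w x ∂μ = 0 := by
  have integrable_uv : Integrable (emacDensity u v w) μ :=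
    (continuous_emacDensity hu hv.continuous hw.contDiff.continuous).integrable_of_hasCompactSupport
      (hasCompactSupport_emacDensity_left hcu v w)
  have integrable_vu : Integrable (emacDensity v u w) μ :=
    (continuous_emacDensity hv hu.continuous hw.contDiff.continuous).integrable_of_hasCompactSupport
      (hasCompactSupport_emacDensity_middle hcu v w)
  calc ∫ x, emacDensity u v w x ∂μ + ∫ x, emacDensity v u w x ∂μ
    _ = ∫ x, emacDensity u v w x + emacDensity v u w x ∂μ :=
      (integral_add integrable_uv integrable_vu).symm
    _ = ∫ x, divergence (emacFlux u v w) x ∂μ := by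
      simp only [divergence_emacFlux (hu.differentiable one_ne_zero)
        (hv.differentiable one_ne_zero) hw]
    _ = 0 := integral_divergence_eq_zero_of_hasCompactSupport (contDiff_emacFlux hu hv hw.contDiff)
      (hasCompactSupport_emacFlux hcu v w)

theorem newton_emac_rot_eq_zero_general {a b w : E → E} (ha : ContDiff ℝ 1 a)
    (hb : ContDiff ℝ 1 b) (hca : HasCompactSupport a) (hw : IsKillingField w) :
    ∫ x, emacDensity a b w x ∂μ + ∫ x, emacDensity b a w x ∂μ - ∫ x, emacDensity a a w x ∂μ
      = 0 := by
  have symmetrized_ab := integral_emacDensity_add_swap_eq_zero (μ := μ) ha hb hca hw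
  have diagonal_a : ∫ x, emacDensity a a w x ∂μ = 0 :=
    add_self_eq_zero.1 (integral_emacDensity_add_swap_eq_zero ha ha hca hw)
  rw [symmetrized_ab, diagonal_a, sub_zero]

end Emac

lemma dvg_eq_divergence (u : E2 → E2) (x : E2) : dvg u x = divergence u x := by
  simp [dvg, divergence, LinearMap.trace_eq_sum_inner _ (EuclideanSpace.basisFun (Fin 2) ℝ),
    EuclideanSpace.inner_single_left]

lemma bEmac_eq_integral_emacDensity (u v w : E2 → E2) :
    bEmac u v w = ∫ x, emacDensity u v w x := by
  simp only [bEmac, emacDensity, dvg_eq_divergence]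

lemma isLinearMap_phi : IsLinearMap ℝ phi where
  map_add x y := by ext i; fin_cases i <;> simp [phi, add_comm]
  map_smul c x := by ext i; fin_cases i <;> simp [phi]

lemma inner_phi_left_add_inner_phi_right (y z : E2) : ⟪phi y, z⟫ + ⟪y, phi z⟫ = 0 := by
  simp [phi, PiLp.inner_apply, Fin.sum_univ_two]

lemma isKillingField_phi : IsKillingField phi :=
  isKillingField_of_skew (A := isLinearMap_phi.mk'.toContinuousLinearMap)
    inner_phi_left_add_inner_phi_right

theorem newton_emac_rot_eq_zero
    (a b : E2 → E2)
    (ha : ContDiff ℝ 1 a) (hb : ContDiff ℝ 1 b)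
    (hca : HasCompactSupport a) (hcb : HasCompactSupport b) :
    bEmac a b phi + bEmac b a phi - bEmac a a phi = 0 := by
  simpa only [bEmac_eq_integral_emacDensity] using
    newton_emac_rot_eq_zero_general ha hb hca isKillingField_phi
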